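/- arXiv:2202.12061 — 4 statements merged into one kernel-verified Lean document; each statement's English description precedes it below -/
import Mathlib

section
/- The combinatorial R-map satisfies the set-theoretical tetrahedron equation on ℕ⁶: as maps from ℕ⁶ to ℕ⁶, R₍₁,₂,₄₎ ∘ R₍₁,₃,₅₎ ∘ R₍₂,₃,₆₎ ∘ R₍₄,₅,₆₎ = R₍₄,₅,₆₎ ∘ R₍₂,₃,₆₎ ∘ R₍₁,₃,₅₎ ∘ R₍₁,₂,₄₎. -/
/-- The combinatorial R-map on ℕ³. -/
def combR : ℕ × ℕ × ℕ → ℕ × ℕ × ℕ :=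
  fun p => (p.2.1 + (p.1 - p.2.2), min p.1 p.2.2, p.2.1 + (p.2.2 - p.1))

/-- `app3 f i j k` applies `f` to the components at positions `i, j, k` (in that order)
of an `N`-fold product, leaving all other components unchanged. -/
def app3 {V : Type*} {N : ℕ} (f : V × V × V → V × V × V) (i j k : Fin N)
    (v : Fin N → V) : Fin N → V := fun m =>
  if m = i then (f (v i, v j, v k)).1
  else if m = j then (f (v i, v j, v k)).2.1
  else if m = k then (f (v i, v j, v k)).2.2
  else v m

/-!
The map `R` is the tropicalization, `(+, *, /) ↦ (min, +, -)`, of the subtraction-free rational map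
`(a, b, c) ↦ (ab/(a + c), a + c, bc/(a + c))`, so it suffices to treat the latter over a semifield.
It commutes with `(a, b, c) ↦ (c, b, a)`, and therefore the two sides of its tetrahedron equation
are exchanged by conjugation with `(a, b, c, d, e, f) ↦ (f, e, c, d, b, a)`. With
`P = ab + ae + de`, `Q = bd + bf + ef` and `S = a + d + f`, the left-hand side is
`(abc/P, P/S, S, bcdeS/(PQ), Q/S, cef/Q)`, which is invariant under this conjugation because the
exchange swaps `P` and `Q` and fixes `S`.
-/

section App3

variable {V W : Type*} {N : ℕ} {f : V × V × V → V × V × V}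

theorem app3_semiconj {g : W × W × W → W × W × W} {φ : V → W}
    (h : Function.Semiconj (Prod.map φ (Prod.map φ φ)) f g) (i j k : Fin N) :
    Function.Semiconj (φ ∘ ·) (app3 f i j k) (app3 g i j k) := by
  intro v
  funext m
  have hv : g (φ (v i), φ (v j), φ (v k)) = Prod.map φ (Prod.map φ φ) (f (v i, v j, v k)) :=
    (h (v i, v j, v k)).symm
  simp only [app3, Function.comp_apply, hv, Prod.map_fst, Prod.map_snd, apply_ite φ]

theorem app3_comp_perm (σ : Equiv.Perm (Fin N)) (i j k : Fin N) (v : Fin N → V) :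
    app3 f i j k (v ∘ σ) = app3 f (σ i) (σ j) (σ k) v ∘ σ := by
  funext m
  simp only [app3, Function.comp_apply, σ.injective.eq_iff]

/-- The reversal `(a, b, c) ↦ (c, b, a)` of a triple. -/
def reverseTriple (p : V × V × V) : V × V × V := (p.2.2, p.2.1, p.1)

theorem app3_comm_of_commute_reverseTriple (hf : Function.Commute f reverseTriple)
    {i j k : Fin N} (hij : i ≠ j) (hik : i ≠ k) (hjk : j ≠ k) : app3 f k j i = app3 f i j k := by
  funext v m
  have hv : f (v k, v j, v i) = reverseTriple (f (v i, v j, v k)) := hf (v i, v j, v k)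
  simp only [app3, hv, reverseTriple]
  split_ifs <;> simp_all

end App3

section Tetrahedron

variable {V W : Type*} {f : V × V × V → V × V × V} {g : W × W × W → W × W × W} {φ : V → W}

/-- The left-hand side of the tetrahedron equation for the map `f`. -/
def tetrahedronLeft (f : V × V × V → V × V × V) : (Fin 6 → V) → Fin 6 → V :=
  app3 f 0 1 3 ∘ app3 f 0 2 4 ∘ app3 f 1 2 5 ∘ app3 f 3 4 5

/-- The right-hand side of the tetrahedron equation for the map `f`. -/
def tetrahedronRight (f : V × V × V → V × V × V) : (Fin 6 → V) → Fin 6 → V :=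
  app3 f 3 4 5 ∘ app3 f 1 2 5 ∘ app3 f 0 2 4 ∘ app3 f 0 1 3

/-- The symmetry of the tetrahedron equation: it exchanges the positions `0 ↔ 5` and `1 ↔ 4`. -/
def tetrahedronReflection : Equiv.Perm (Fin 6) := Equiv.swap 0 5 * Equiv.swap 1 4

theorem coe_tetrahedronReflection : ⇑tetrahedronReflection = ![5, 4, 2, 3, 1, 0] := by
  decide

theorem tetrahedronLeft_comp_reflection (hf : Function.Commute f reverseTriple) (v : Fin 6 → V) :
    tetrahedronLeft f (v ∘ tetrahedronReflection) =
      tetrahedronRight f v ∘ tetrahedronReflection := by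
  have reverse_013 : app3 f (3 : Fin 6) 1 0 = app3 f 0 1 3 :=
    app3_comm_of_commute_reverseTriple hf (by decide) (by decide) (by decide)
  have reverse_024 : app3 f (4 : Fin 6) 2 0 = app3 f 0 2 4 :=
    app3_comm_of_commute_reverseTriple hf (by decide) (by decide) (by decide)
  have reverse_125 : app3 f (5 : Fin 6) 2 1 = app3 f 1 2 5 :=
    app3_comm_of_commute_reverseTriple hf (by decide) (by decide) (by decide)
  have reverse_345 : app3 f (5 : Fin 6) 4 3 = app3 f 3 4 5 :=
    app3_comm_of_commute_reverseTriple hf (by decide) (by decide) (by decide)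
  simp only [tetrahedronLeft, tetrahedronRight, Function.comp_apply, app3_comp_perm]
  simp [coe_tetrahedronReflection, reverse_013, reverse_024, reverse_125, reverse_345]

theorem tetrahedronLeft_semiconj (h : Function.Semiconj (Prod.map φ (Prod.map φ φ)) f g) :
    Function.Semiconj (φ ∘ ·) (tetrahedronLeft f) (tetrahedronLeft g) :=
  (app3_semiconj h 0 1 3).comp_right <| (app3_semiconj h 0 2 4).comp_right <|
    (app3_semiconj h 1 2 5).comp_right (app3_semiconj h 3 4 5)

theorem tetrahedronRight_semiconj (h : Function.Semiconj (Prod.map φ (Prod.map φ φ)) f g) :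
    Function.Semiconj (φ ∘ ·) (tetrahedronRight f) (tetrahedronRight g) :=
  (app3_semiconj h 3 4 5).comp_right <| (app3_semiconj h 1 2 5).comp_right <|
    (app3_semiconj h 0 2 4).comp_right (app3_semiconj h 0 1 3)

end Tetrahedron

section Semifield

variable {K : Type*} [Semifield K]

/-- The geometric lift `(a, b, c) ↦ (ab/(a + c), a + c, bc/(a + c))` of the combinatorial R-map to a
semifield. Where `a + c = 0`, the outer components are the junk value `0`. -/
def geomR (p : K × K × K) : K × K × K :=
  (p.1 * p.2.1 / (p.1 + p.2.2), p.1 + p.2.2, p.2.1 * p.2.2 / (p.1 + p.2.2))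

theorem geomR_commute_reverseTriple : Function.Commute (geomR (K := K)) reverseTriple := by
  rintro ⟨a, b, c⟩
  simp only [geomR, reverseTriple, add_comm c a, mul_comm c b, mul_comm b a]

/-- The common value of the two sides of the tetrahedron equation for `geomR`
at a point with nonzero components. -/
def geomTetrahedron (v : Fin 6 → K) : Fin 6 → K :=
  let P := v 0 * v 1 + v 0 * v 4 + v 3 * v 4
  let Q := v 1 * v 3 + v 1 * v 5 + v 4 * v 5
  let S := v 0 + v 3 + v 5
  ![v 0 * v 1 * v 2 / P, P / S, S, v 1 * v 2 * v 3 * v 4 * S / (P * Q), Q / S,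
    v 2 * v 4 * v 5 / Q]

theorem geomTetrahedron_comp_reflection (v : Fin 6 → K) :
    geomTetrahedron (v ∘ tetrahedronReflection) = geomTetrahedron v ∘ tetrahedronReflection := by
  funext m
  simp only [geomTetrahedron, coe_tetrahedronReflection, Function.comp_apply]
  fin_cases m <;>
    simp only [Matrix.cons_val, Fin.reduceFinMk, Fin.zero_eta, Fin.mk_one, Fin.isValue] <;> ring

-- No sum of nonzero elements vanishes, so neither do the denominators of `geomR`.
variable [Subsingleton (AddUnits K)]

theorem tetrahedronLeft_geomR {v : Fin 6 → K} (hv : ∀ i, v i ≠ 0) :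
    tetrahedronLeft geomR v = geomTetrahedron v := by
  set P := v 0 * v 1 + v 0 * v 4 + v 3 * v 4 with hP
  set Q := v 1 * v 3 + v 1 * v 5 + v 4 * v 5 with hQ
  set S := v 0 + v 3 + v 5 with hS
  set T := v 3 + v 5 with hT
  have P_ne_zero : P ≠ 0 := by simp [P, hv]
  have Q_ne_zero : Q ≠ 0 := by simp [Q, hv]
  have S_ne_zero : S ≠ 0 := by simp [S, hv]
  have T_ne_zero : T ≠ 0 := by simp [T, hv]
  have geomR_345 : geomR (v 3, v 4, v 5) = (v 3 * v 4 / T, T, v 4 * v 5 / T) := rfl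
  have geomR_125 : geomR (v 1, v 2, v 4 * v 5 / T) =
      (v 1 * v 2 * T / Q, Q / T, v 2 * v 4 * v 5 / Q) := by
    have add_eq : v 1 + v 4 * v 5 / T = Q / T := by
      rw [eq_div_iff T_ne_zero, add_mul, div_mul_cancel₀ _ T_ne_zero, hQ, hT, mul_add]
    simp only [geomR, add_eq]
    ext <;> field_simp
  have geomR_024 : geomR (v 0, Q / T, T) = (v 0 * Q / (T * S), S, Q / S) := by
    have add_eq : v 0 + T = S := (add_assoc _ _ _).symm
    simp only [geomR, add_eq]
    ext <;> field_simp
  have geomR_013 : geomR (v 0 * Q / (T * S), v 1 * v 2 * T / Q, v 3 * v 4 / T) =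
      (v 0 * v 1 * v 2 / P, P / S, v 1 * v 2 * v 3 * v 4 * S / (P * Q)) := by
    have add_eq : v 0 * Q / (T * S) + v 3 * v 4 / T = P / S := by
      calc v 0 * Q / (T * S) + v 3 * v 4 / T
          = (v 0 * Q + v 3 * v 4 * S) / (T * S) := by field_simp
        _ = P * T / (T * S) := by congr 1; ring
        _ = P / S := by field_simp
    simp only [geomR, add_eq]
    ext <;> field_simp
  funext m
  fin_cases m <;>
    simp [tetrahedronLeft, app3, geomTetrahedron, geomR_345, geomR_125, geomR_024, geomR_013,
      ← hP, ← hQ, ← hS]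

theorem geomR_tetrahedron {v : Fin 6 → K} (hv : ∀ i, v i ≠ 0) :
    tetrahedronLeft geomR v = tetrahedronRight geomR v := by
  apply tetrahedronReflection.surjective.injective_comp_right
  calc tetrahedronLeft geomR v ∘ tetrahedronReflection
      = geomTetrahedron (v ∘ tetrahedronReflection) := by
        rw [tetrahedronLeft_geomR hv, geomTetrahedron_comp_reflection]
    _ = tetrahedronLeft geomR (v ∘ tetrahedronReflection) :=
        (tetrahedronLeft_geomR fun i => hv (tetrahedronReflection i)).symm
    _ = tetrahedronRight geomR v ∘ tetrahedronReflection :=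
        tetrahedronLeft_comp_reflection geomR_commute_reverseTriple v

end Semifield

section Tropicalization

instance tropicalSemifield {R : Type*} [LinearOrderedAddCommGroupWithTop R] :
    Semifield (Tropical R) where
  exists_pair_ne := ⟨0, 1, Tropical.trop_injective.ne LinearOrderedAddCommGroupWithTop.top_ne_zero⟩
  inv_zero := Tropical.untrop_injective LinearOrderedAddCommGroupWithTop.neg_top
  mul_inv_cancel _ ha := Tropical.untrop_injective <|
    LinearOrderedAddCommGroupWithTop.add_neg_cancel_of_ne_top (Tropical.untrop_injective.ne ha)
  div_eq_mul_inv _ _ := Tropical.untrop_injective (sub_eq_add_neg _ _)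
  nnqsmul := _
  nnqsmul_def _ _ := rfl
  zpow n x := x ^ n
  zpow_zero' _ := Tropical.untrop_injective (zero_zsmul _)
  zpow_succ' _ _ := Tropical.untrop_injective (SubNegMonoid.zsmul_succ' _ _)
  zpow_neg' _ _ := Tropical.untrop_injective (SubNegMonoid.zsmul_neg' _ _)

instance tropical_subsingleton_addUnits {R : Type*} [LinearOrder R] [OrderTop R] :
    Subsingleton (AddUnits (Tropical R)) where
  allEq x y := by
    have eq_zero (z : AddUnits (Tropical R)) : (z : Tropical R) = 0 :=
      Tropical.untrop_injective (min_eq_top.mp (congrArg Tropical.untrop z.val_neg)).1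
    exact AddUnits.ext ((eq_zero x).trans (eq_zero y).symm)

/-- The embedding of `ℕ` into the min-plus semifield `ℤ ∪ {∞}`. -/
def tropNat (n : ℕ) : Tropical (WithTop ℤ) := Tropical.trop ((n : ℤ) : WithTop ℤ)

theorem tropNat_injective : Function.Injective tropNat := fun m n h => by
  simpa [tropNat] using h

theorem tropNat_ne_zero (n : ℕ) : tropNat n ≠ 0 :=
  Tropical.trop_injective.ne WithTop.coe_ne_top

theorem tropNat_add (m n : ℕ) : tropNat (m + n) = tropNat m * tropNat n := by
  simp [tropNat]

theorem tropNat_min (m n : ℕ) : tropNat (min m n) = tropNat m + tropNat n := by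
  simp [tropNat]

theorem combR_semiconj_geomR :
    Function.Semiconj (Prod.map tropNat (Prod.map tropNat tropNat)) combR geomR := by
  rintro ⟨a, b, c⟩
  have hac : tropNat a + tropNat c ≠ 0 := by
    rw [← tropNat_min]
    exact tropNat_ne_zero _
  have fst_eq : tropNat (b + (a - c)) = tropNat a * tropNat b / (tropNat a + tropNat c) := by
    rw [eq_div_iff hac, ← tropNat_min, ← tropNat_add, ← tropNat_add]
    congr 1
    omega
  have thd_eq : tropNat (b + (c - a)) = tropNat b * tropNat c / (tropNat a + tropNat c) := by
    rw [eq_div_iff hac, ← tropNat_min, ← tropNat_add, ← tropNat_add]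
    congr 1
    omega
  simp only [combR, geomR, Prod.map_apply, fst_eq, tropNat_min, thd_eq]

end Tropicalization

/-- The set-theoretical tetrahedron equation on ℕ⁶ (positions written 1-based in the paper,
0-based here). -/
theorem combR_tetrahedron :
    app3 combR 0 1 3 ∘ app3 combR 0 2 4 ∘ app3 combR 1 2 5 ∘ app3 combR 3 4 5 =
      app3 combR 3 4 5 ∘ app3 combR 1 2 5 ∘ app3 combR 0 2 4 ∘
        (app3 combR 0 1 3 : (Fin 6 → ℕ) → Fin 6 → ℕ) := by
  funext v
  apply tropNat_injective.comp_left
  calc tropNat ∘ tetrahedronLeft combR v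
      = tetrahedronLeft geomR (tropNat ∘ v) := tetrahedronLeft_semiconj combR_semiconj_geomR v
    _ = tetrahedronRight geomR (tropNat ∘ v) := geomR_tetrahedron fun i => tropNat_ne_zero (v i)
    _ = tropNat ∘ tetrahedronRight combR v :=
        (tetrahedronRight_semiconj combR_semiconj_geomR v).symm
end

section
/- The combinatorial K-map is an involution: for all a, b, c, d ∈ ℕ, K(K(a,b,c,d)) = (a,b,c,d). -/
/-- The combinatorial K-map on ℕ⁴: `K(a,b,c,d) = (a',b',c',d')` where, computing in ℤ,
`x = (c − a + (d − b)₊)₊`, `a' = x + a + b − d`, `b' = c − x + d − min(a, c + x)`,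
`c' = min(a, c + x)`, `d' = b + (c + x − a)₊`, with `(x)₊ = max(x,0)`;
all four outputs are nonnegative integers. -/
def combK : ℕ × ℕ × ℕ × ℕ → ℕ × ℕ × ℕ × ℕ := fun p =>
  let a : ℤ := p.1; let b : ℤ := p.2.1; let c : ℤ := p.2.2.1; let d : ℤ := p.2.2.2
  let x : ℤ := max (c - a + max (d - b) 0) 0
  ((x + a + b - d).toNat, (c - x + d - min a (c + x)).toNat,
    (min a (c + x)).toNat, (b + max (c + x - a) 0).toNat)

/-!
The K-map makes sense on `G⁴` for every linearly ordered abelian group `G`, and is already an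
involution there. It translates `(a, b, c, d)` by a vector depending only on `u = c - a` and
`v = d - b`, and this vector is linear on each of four cones covering the `(u, v)`-plane. The
induced map on the plane preserves two of the cones and exchanges the other two, and in each case
the vector attached to the image of `(u, v)` is the opposite of the one attached to `(u, v)`.
-/

section OrderedGroup

variable {G : Type*} [AddCommGroup G] [LinearOrder G]

/-- The K-map on the fourth power of a linearly ordered abelian group, given by the same formulas
as `combK` but without truncation to `ℕ`. -/
def orderedCombK : G × G × G × G → G × G × G × G := fun (a, b, c, d) =>
  let x := max (c - a + max (d - b) 0) 0
  (x + a + b - d, c - x + d - min a (c + x), min a (c + x), b + max (c + x - a) 0)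

/-- The vector by which the K-map translates `(a, b, c, d)`, as a function of `u = c - a` and
`v = d - b`. Here `x` is the auxiliary quantity of the K-map and `z = (c + x - a)₊`. -/
def combKDisplacement (u v : G) : G × G × G × G :=
  let x := max (u + max v 0) 0
  let z := max (u + x) 0
  (x - v, v + z - 2 • x, x - z, z - v)

variable [IsOrderedAddMonoid G]

theorem orderedCombK_eq_add_displacement (a b c d : G) :
    orderedCombK (a, b, c, d) = (a, b, c, d) + combKDisplacement (c - a) (d - b) := by
  have min_eq (x : G) : min a (c + x) = c + x - max (c + x - a) 0 := by grind
  have sub_add_eq (x : G) : c - a + x = c + x - a := by abel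
  simp only [orderedCombK, combKDisplacement, min_eq, sub_add_eq, Prod.mk_add_mk, Prod.mk.injEq]
  grind

theorem orderedCombK_nonneg {p : G × G × G × G} (hp : 0 ≤ p) : 0 ≤ orderedCombK p := by
  obtain ⟨a, b, c, d⟩ := p
  obtain ⟨ha : 0 ≤ a, hb : 0 ≤ b, hc : 0 ≤ c, hd : 0 ≤ d⟩ := hp
  set x := max (c - a + max (d - b) 0) 0
  have hx_nonneg : 0 ≤ x := le_max_right _ _
  have le_fst : c ≤ x + a + b - d := by grind
  have two_nsmul_sub_le : 2 • x - max (c + x - a) 0 ≤ max (d - b) 0 := by grind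
  have max_sub_le : max (d - b) 0 ≤ d := max_le (sub_le_self d hb) hd
  have snd_nonneg : 0 ≤ c - x + d - min a (c + x) := calc
    0 ≤ d - (2 • x - max (c + x - a) 0) := sub_nonneg.2 (two_nsmul_sub_le.trans max_sub_le)
    _ = c - x + d - min a (c + x) := by grind
  exact ⟨hc.trans le_fst, snd_nonneg, le_min ha (add_nonneg hc hx_nonneg),
    add_nonneg hb (le_max_right _ _)⟩

section Cones

variable {u v : G}

theorem combKDisplacement_of_nonpos_of_add_nonpos (hu : u ≤ 0) (huv : u + v ≤ 0) :
    combKDisplacement u v = (-v, v, 0, -v) := by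
  have hx : max (u + max v 0) 0 = 0 := by grind
  have hz : max (u + 0) 0 = 0 := by grind
  simp only [combKDisplacement, hx, hz, Prod.mk.injEq]
  grind

theorem combKDisplacement_of_add_nonneg_of_two_nsmul_add_nonpos
    (huv : 0 ≤ u + v) (h2uv : 2 • u + v ≤ 0) :
    combKDisplacement u v = (u, -(2 • u + v), u + v, -v) := by
  have hx : max (u + max v 0) 0 = u + v := by grind
  have hz : max (u + (u + v)) 0 = 0 := by grind
  simp only [combKDisplacement, hx, hz, Prod.mk.injEq]
  grind

theorem combKDisplacement_of_nonneg_right_of_two_nsmul_add_nonneg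
    (hv : 0 ≤ v) (h2uv : 0 ≤ 2 • u + v) :
    combKDisplacement u v = (u, 0, -u, 2 • u) := by
  have hx : max (u + max v 0) 0 = u + v := by grind
  have hz : max (u + (u + v)) 0 = 2 • u + v := by grind
  simp only [combKDisplacement, hx, hz, Prod.mk.injEq]
  grind

theorem combKDisplacement_of_nonneg_of_nonpos (hu : 0 ≤ u) (hv : v ≤ 0) :
    combKDisplacement u v = (u - v, v, -u, 2 • u - v) := by
  have hx : max (u + max v 0) 0 = u := by grind
  have hz : max (u + u) 0 = 2 • u := by grind
  simp only [combKDisplacement, hx, hz, Prod.mk.injEq]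
  grind

end Cones

theorem combKDisplacement_cones_cover (u v : G) :
    (u ≤ 0 ∧ u + v ≤ 0) ∨ (0 ≤ u + v ∧ 2 • u + v ≤ 0) ∨
      (0 ≤ v ∧ 0 ≤ 2 • u + v) ∨ (0 ≤ u ∧ v ≤ 0) := by
  grind

theorem combKDisplacement_translate_eq_neg (u v : G) :
    let t := combKDisplacement u v
    combKDisplacement (u + (t.2.2.1 - t.1)) (v + (t.2.2.2 - t.2.1)) = -t := by
  rcases combKDisplacement_cones_cover u v with
    ⟨hu, huv⟩ | ⟨huv, h2uv⟩ | ⟨hv, h2uv⟩ | ⟨hu, hv⟩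
  · have image_fst : u + (0 - -v) = u + v := by abel
    have image_snd : v + (-v - v) = -v := by abel
    simp only [combKDisplacement_of_nonpos_of_add_nonpos hu huv, image_fst, image_snd]
    rw [combKDisplacement_of_nonpos_of_add_nonpos huv (by simpa using hu)]
    simp
  · have image_fst : u + (u + v - u) = u + v := by abel
    have image_snd : v + (-v - -(2 • u + v)) = 2 • u + v := by abel
    simp only [combKDisplacement_of_add_nonneg_of_two_nsmul_add_nonpos huv h2uv, image_fst,
      image_snd]
    rw [combKDisplacement_of_nonneg_of_nonpos huv h2uv]
    simp only [Prod.neg_mk, Prod.mk.injEq]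
    grind
  · have image_fst : u + (-u - u) = -u := by abel
    have image_snd : v + (2 • u - 0) = 2 • u + v := by abel
    simp only [combKDisplacement_of_nonneg_right_of_two_nsmul_add_nonneg hv h2uv, image_fst,
      image_snd]
    rw [combKDisplacement_of_nonneg_right_of_two_nsmul_add_nonneg h2uv (by simpa using hv)]
    simp
  · have image_fst : u + (-u - (u - v)) = v - u := by abel
    have image_snd : v + (2 • u - v - v) = 2 • u - v := by abel
    have image_add : v - u + (2 • u - v) = u := by abel
    have image_two_nsmul_add : 2 • (v - u) + (2 • u - v) = v := by abel
    simp only [combKDisplacement_of_nonneg_of_nonpos hu hv, image_fst, image_snd]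
    rw [combKDisplacement_of_add_nonneg_of_two_nsmul_add_nonpos (image_add.symm ▸ hu)
      (image_two_nsmul_add.symm ▸ hv), image_add, image_two_nsmul_add]
    simp

theorem combK_involution_general : Function.Involutive (orderedCombK (G := G)) := by
  rintro ⟨a, b, c, d⟩
  have displacement_neg := combKDisplacement_translate_eq_neg (c - a) (d - b)
  rw [orderedCombK_eq_add_displacement a b c d]
  generalize combKDisplacement (c - a) (d - b) = t at displacement_neg ⊢
  obtain ⟨ta, tb, tc, td⟩ := t
  rw [Prod.mk_add_mk, Prod.mk_add_mk, Prod.mk_add_mk, orderedCombK_eq_add_displacement,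
    add_sub_add_comm c, add_sub_add_comm d, displacement_neg]
  simp

end OrderedGroup

/-- The coordinatewise inclusion `ℕ⁴ → ℤ⁴`, along which `combK` is the restriction of
`orderedCombK`. -/
def natQuadToInt (p : ℕ × ℕ × ℕ × ℕ) : ℤ × ℤ × ℤ × ℤ :=
  (p.1, p.2.1, p.2.2.1, p.2.2.2)

theorem natQuadToInt_injective : Function.Injective natQuadToInt := by
  rintro ⟨a, b, c, d⟩ ⟨a', b', c', d'⟩ h
  simpa [natQuadToInt] using h

theorem natQuadToInt_nonneg (p : ℕ × ℕ × ℕ × ℕ) : 0 ≤ natQuadToInt p :=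
  ⟨Int.natCast_nonneg _, Int.natCast_nonneg _, Int.natCast_nonneg _, Int.natCast_nonneg _⟩

theorem natQuadToInt_combK (p : ℕ × ℕ × ℕ × ℕ) :
    natQuadToInt (combK p) = orderedCombK (natQuadToInt p) := by
  obtain ⟨ha, hb, hc, hd⟩ := orderedCombK_nonneg (natQuadToInt_nonneg p)
  exact Prod.ext (Int.toNat_of_nonneg ha) <| Prod.ext (Int.toNat_of_nonneg hb) <|
    Prod.ext (Int.toNat_of_nonneg hc) (Int.toNat_of_nonneg hd)

/-- The combinatorial K-map is an involution. -/
theorem combK_involution (a b c d : ℕ) : combK (combK (a, b, c, d)) = (a, b, c, d) :=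
  natQuadToInt_injective <| by
    rw [natQuadToInt_combK, natQuadToInt_combK, combK_involution_general]
end

section
/- Let V be a type and R : V³ → V³ any map. Then the following two identities of maps from V⁶ to V⁶ are equivalent: (i) P₍₃,₄₎ ∘ Φ₍₁,₂,₃₎ ∘ Φ₍₃,₄,₅₎ ∘ P₍₅,₆₎ ∘ P₍₂,₃₎ ∘ Φ₍₃,₄,₅₎ ∘ Φ₍₁,₂,₃₎ = Φ₍₄,₅,₆₎ ∘ Φ₍₂,₃,₄₎ ∘ P₍₁,₂₎ ∘ P₍₄,₅₎ ∘ Φ₍₂,₃,₄₎ ∘ Φ₍₄,₅,₆₎ ∘ P₍₃,₄₎; (ii) the tetrahedron equation R₍₁,₂,₄₎ ∘ R₍₁,₃,₅₎ ∘ R₍₂,₃,₆₎ ∘ R₍₄,₅,₆₎ = R₍₄,₅,₆₎ ∘ R₍₂,₃,₆₎ ∘ R₍₁,₃,₅₎ ∘ R₍₁,₂,₄₎. -/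
/-- `transp i j` exchanges the components at positions `i` and `j` of an `N`-fold product. -/
def transp {V : Type*} {N : ℕ} (i j : Fin N) (v : Fin N → V) : Fin N → V := fun m =>
  if m = i then v j else if m = j then v i else v m

/-- `phi R i j k = R₍i,j,k₎ ∘ P₍i,k₎`. -/
def phi {V : Type*} {N : ℕ} (R : V × V × V → V × V × V) (i j k : Fin N) :
    (Fin N → V) → Fin N → V :=
  app3 R i j k ∘ transp i k

/-!
Read a point of the product as strands carrying labels: a vector `v ∘ σ` has the entry labelled
`σ m` at position `m`. Then `P₍i,j₎` only swaps two labels, and `Φ₍i,j,k₎` applies `R` to the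
entries labelled `σ k, σ j, σ i` while swapping the outer two labels. Started from the reversed
labelling, each side of the `Φ`-identity is a word for the longest permutation of six strands, so
it restores the order of the labels, and the labels met by its four factors `Φ` are those of one
side of the tetrahedron equation.
-/

open Equiv Function

section Relabelling

variable {V : Type*} {M N : ℕ}

theorem transp_eq_comp_swap (i j : Fin N) (v : Fin N → V) : transp i j v = v ∘ swap i j := by
  funext m
  simp only [transp, comp_apply, swap_apply_def, apply_ite v]

theorem app3_comp_of_injective (f : V × V × V → V × V × V) {σ : Fin M → Fin N}
    (hσ : Injective σ) (i j k : Fin M) (v : Fin N → V) :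
    app3 f i j k (v ∘ σ) = app3 f (σ i) (σ j) (σ k) v ∘ σ := by
  funext m
  simp only [app3, comp_apply, hσ.eq_iff]

theorem transp_comp_perm (i j : Fin N) (σ : Perm (Fin N)) (v : Fin N → V) :
    transp i j (v ∘ σ) = v ∘ ⇑(σ * swap i j) :=
  transp_eq_comp_swap i j (v ∘ σ)

theorem phi_comp_perm (R : V × V × V → V × V × V) {i j k : Fin N} (hji : j ≠ i) (hjk : j ≠ k)
    (σ : Perm (Fin N)) (v : Fin N → V) :
    phi R i j k (v ∘ σ) = app3 R (σ k) (σ j) (σ i) v ∘ ⇑(σ * swap i k) := by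
  simp only [phi, comp_apply, transp_comp_perm, app3_comp_of_injective R (Equiv.injective _),
    Perm.mul_apply, swap_apply_left, swap_apply_right, swap_apply_of_ne_of_ne hji hjk]

end Relabelling

section SixStrands

variable {V : Type*} (R : V × V × V → V × V × V)

theorem phi_word_comp_revPerm_left :
    (transp 2 3 ∘ phi R 0 1 2 ∘ phi R 2 3 4 ∘ transp 4 5 ∘ transp 1 2 ∘ phi R 2 3 4 ∘
        phi R 0 1 2) ∘ (fun v : Fin 6 → V ↦ v ∘ Fin.revPerm) =
      app3 R 0 1 3 ∘ app3 R 0 2 4 ∘ app3 R 1 2 5 ∘ app3 R 3 4 5 := by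
  have labels_sorted : Fin.revPerm * swap 0 2 * swap 2 4 * swap 1 2 * swap 4 5 * swap 2 4 *
      swap 0 2 * swap 2 3 = (1 : Perm (Fin 6)) := by decide
  funext v
  simp (disch := decide) only [comp_apply, phi_comp_perm, transp_comp_perm]
  rw [labels_sorted]
  -- What remains is to evaluate the labels at which each `app3` acts.
  rfl

theorem phi_word_comp_revPerm_right :
    (phi R 3 4 5 ∘ phi R 1 2 3 ∘ transp 0 1 ∘ transp 3 4 ∘ phi R 1 2 3 ∘ phi R 3 4 5 ∘
        transp 2 3) ∘ (fun v : Fin 6 → V ↦ v ∘ Fin.revPerm) =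
      app3 R 3 4 5 ∘ app3 R 1 2 5 ∘ app3 R 0 2 4 ∘ app3 R 0 1 3 := by
  have labels_sorted : Fin.revPerm * swap 2 3 * swap 3 5 * swap 1 3 * swap 3 4 * swap 0 1 *
      swap 1 3 * swap 3 5 = (1 : Perm (Fin 6)) := by decide
  funext v
  simp (disch := decide) only [comp_apply, phi_comp_perm, transp_comp_perm]
  rw [labels_sorted]
  rfl

end SixStrands

/-- For any map `R : V³ → V³`, the identity
`P₃₄ Φ₁₂₃ Φ₃₄₅ P₅₆ P₂₃ Φ₃₄₅ Φ₁₂₃ = Φ₄₅₆ Φ₂₃₄ P₁₂ P₄₅ Φ₂₃₄ Φ₄₅₆ P₃₄` of maps on the 6-fold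
product (positions written 1-based in the paper, 0-based here) is equivalent to the
tetrahedron equation `R₁₂₄ R₁₃₅ R₂₃₆ R₄₅₆ = R₄₅₆ R₂₃₆ R₁₃₅ R₁₂₄`. -/
theorem phi_identity_iff_tetrahedron {V : Type*} (R : V × V × V → V × V × V) :
    (transp 2 3 ∘ phi R 0 1 2 ∘ phi R 2 3 4 ∘ transp 4 5 ∘ transp 1 2 ∘ phi R 2 3 4 ∘
        (phi R 0 1 2 : (Fin 6 → V) → Fin 6 → V) =
      phi R 3 4 5 ∘ phi R 1 2 3 ∘ transp 0 1 ∘ transp 3 4 ∘ phi R 1 2 3 ∘ phi R 3 4 5 ∘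
        transp 2 3) ↔
    (app3 R 0 1 3 ∘ app3 R 0 2 4 ∘ app3 R 1 2 5 ∘ app3 R 3 4 5 =
      app3 R 3 4 5 ∘ app3 R 1 2 5 ∘ app3 R 0 2 4 ∘
        (app3 R 0 1 3 : (Fin 6 → V) → Fin 6 → V)) := by
  have reversal_surjective : Surjective fun v : Fin 6 → V ↦ v ∘ Fin.revPerm :=
    (Fin.revPerm.symm.arrowCongr (Equiv.refl V)).surjective
  rw [← phi_word_comp_revPerm_left, ← phi_word_comp_revPerm_right,
    reversal_surjective.right_cancellable]
end

section
/- The combinatorial maps solve the F₄ analogue of the tetrahedron equation on ℕ²⁴: with S = R the combinatorial R-map and K the combinatorial K-map, the 50-factor identity of maps from ℕ²⁴ to ℕ²⁴ holds: R₍₁₄,₁₅,₁₆₎ R₍₉,₁₁,₁₆₎ K₍₇,₈,₁₀,₁₆₎ K₍₁₇,₁₅,₁₃,₉₎ R₍₄,₅,₁₆₎ S₍₇,₁₂,₁₇₎ R₍₁,₂,₁₆₎ S₍₆,₁₀,₁₇₎ R₍₉,₁₄,₁₈₎ K₍₁₇,₅,₃,₁₎ R₍₁₁,₁₅,₁₈₎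 K₍₆,₈,₁₂,₁₈₎ R₍₁,₄,₁₈₎ R₍₁,₈,₁₅₎ S₍₇,₁₃,₁₉₎ K₍₁₉,₁₁,₆,₁₎ K₍₁₉,₁₅,₁₂,₄₎ S₍₃,₁₀,₁₉₎ R₍₄,₈,₁₁₎ K₍₂₀,₁₄,₇,₁₎ R₍₂,₅,₁₈₎ S₍₆,₁₃,₂₀₎ S₍₃,₁₂,₂₀₎ R₍₁,₉,₂₁₎ K₍₂₀,₁₅,₁₀,₂₎ R₍₄,₁₄,₂₁₎ K₍₃,₈,₁₃,₂₁₎ R₍₂,₁₁,₂₁₎ R₍₂,₈,₁₄₎ S₍₆,₇,₂₂₎ K₍₂₂,₄,₃,₂₎ R₍₅,₁₅,₂₁₎ K₍₂₂,₁₄,₁₃,₁₁₎ S₍₁₀,₁₂,₂₂₎ K₍₂₃,₉,₆,₂₎ S₍₃,₇,₂₃₎ S₍₁₉,₂₀,₂₂₎ K₍₂₂,₁₈,₁₇,₁₆₎ S₍₁₀,₁₃,₂₃₎ K₍₂₃,₁₄,₁₂,₅₎ S₍₃,₆,₂₄₎ K₍₂₃,₂₁,₁₉,₁₆₎ K₍₂₄,₉,₇,₄₎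 S₍₁₇,₂₀,₂₃₎ K₍₂₄,₁₁,₁₀,₅₎ S₍₁₂,₁₃,₂₄₎ S₍₁₇,₁₉,₂₄₎ K₍₂₄,₂₁,₂₀,₁₈₎ R₍₅,₈,₉₎ S₍₂₂,₂₃,₂₄₎ = the product of the same 50 operators in the reverse order (each operator keeping its internal index order). -/
/-- `app4 f i j k l` applies `f` to the components at positions `i, j, k, l` (in that order)
of an `N`-fold product, leaving all other components unchanged. -/
def app4 {V : Type*} {N : ℕ} (f : V × V × V × V → V × V × V × V) (i j k l : Fin N)
    (v : Fin N → V) : Fin N → V := fun m =>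
  if m = i then (f (v i, v j, v k, v l)).1
  else if m = j then (f (v i, v j, v k, v l)).2.1
  else if m = k then (f (v i, v j, v k, v l)).2.2.1
  else if m = l then (f (v i, v j, v k, v l)).2.2.2
  else v m

/-!
The operators `R` and `K` record the braid moves of lengths three and four between reduced
expressions of the longest element of `F₄`, one coordinate for each of the 24 positive roots. The
two sides of the equation are two paths of such moves, and the loop they form is filled by the loops
of the rank-three parabolic subgroups. Those of type `A₁ × A₂`, `A₁ × B₂`, ... only say that
operators at disjoint positions commute; those of type `B₃` and `C₃` are shorter equations of the
same shape, in which a product of operators equals the product in the opposite order. As `R` and `K`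
are involutions, conjugation turns such an equation into one for every cyclic rotation of the word.
The positions of `R` may also be read backwards, because `combR` is symmetric in its outer
arguments.

The `B₃` and `C₃` equations come from the foldings `D₄ → B₃` and `A₅ → C₃`: on vectors constant on
the fibres of the folding, `K` is a product of four operators `R`, and the unfolded equations follow
in the same way from the tetrahedron equation, which is the case of type `A₃`.

The filling uses 9, 12 and 24 rank-three loops for `D₄`, `A₅` and `F₄`. They are given explicitly as
lists of moves, and the kernel evaluates a rewriting procedure that is proved correct for every
partially commutative alphabet.
-/

namespace F4Tetrahedron

section TraceRewriting

variable {α M : Type*} [DecidableEq α] [Monoid M] (indep : α → α → Prop) [DecidableRel indep]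

/-- Move the first occurrence of `a` to the front of the word, past letters independent of it, and
return the remaining word; `none` if `a` is absent or blocked. -/
def extract (a : α) : List α → Option (List α)
  | [] => none
  | b :: w =>
    if b = a then some w
    else if indep b a then (extract a w).map (b :: ·)
    else none

/-- Extract the letters of `u` one after the other: if the result is `some v`, then the given word
and `u ++ v` agree up to swaps of adjacent independent letters. -/
def extractAll (u w : List α) : Option (List α) :=
  u.foldlM (fun v a => extract indep a v) w

/-- The letters of a word that lie outside the block `B` and can be moved in front of all of `B`;
`blockers` accumulates the letters that have to stay behind. -/
def predecessors (B : List α) : (blockers w : List α) → List α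
  | _, [] => []
  | blockers, a :: w =>
    if a ∉ B ∧ ∀ b ∈ blockers, indep a b then a :: predecessors B blockers w
    else predecessors B (a :: blockers) w

/-- The letter `a` itself, but read off from `w` if it occurs there. Evaluation in the kernel is
lazy, and this keeps the letters of a rewritten word explicit. -/
def readFrom (w : List α) (a : α) : α :=
  (w.find? (· = a)).getD a

/-- Gather the letters of the block `B` by swaps of independent letters and reverse the block. -/
def reverseBlock (B w : List α) : Option (List α) :=
  let u := predecessors indep B [] w
  (extractAll indep (u ++ B) w).map fun v => u ++ (B.map (readFrom w)).reverse ++ v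

/-- Reverse a sequence of blocks, one after the other. -/
def reverseBlocks (Bs : List (List α)) (w : List α) : Option (List α) :=
  Bs.foldlM (fun v B => reverseBlock indep B v) w

variable {indep} {f : α → M}

theorem readFrom_eq (w : List α) (a : α) : readFrom w a = a := by
  cases h : w.find? (· = a) with
  | none => rw [readFrom, h, Option.getD_none]
  | some b =>
    rw [readFrom, h, Option.getD_some]
    simpa only [decide_eq_true_eq] using List.find?_some h

theorem prod_map_of_extract (hf : ∀ a b, indep a b → Commute (f a) (f b)) {a : α} {w v : List α}
    (h : extract indep a w = some v) : (w.map f).prod = f a * (v.map f).prod := by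
  induction w generalizing v with
  | nil => cases h
  | cons b w ih =>
    rw [extract] at h
    split_ifs at h with hba hind
    · cases h
      rw [List.map_cons, List.prod_cons, hba]
    · obtain ⟨u, hu, rfl⟩ := Option.map_eq_some_iff.1 h
      simp only [List.map_cons, List.prod_cons]
      rw [ih hu, (hf b a hind).left_comm]

theorem prod_map_of_extractAll (hf : ∀ a b, indep a b → Commute (f a) (f b)) {u w v : List α}
    (h : extractAll indep u w = some v) :
    (w.map f).prod = (u.map f).prod * (v.map f).prod := by
  induction u generalizing w with
  | nil =>
    cases h
    rw [List.map_nil, List.prod_nil, one_mul]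
  | cons a u ih =>
    obtain ⟨w', hw', hv⟩ := Option.bind_eq_some_iff.1 h
    rw [prod_map_of_extract hf hw', ih hv, List.map_cons, List.prod_cons, mul_assoc]

theorem prod_map_of_reverseBlock (hf : ∀ a b, indep a b → Commute (f a) (f b)) {B w v : List α}
    (hB : (B.map f).prod = (B.reverse.map f).prod) (h : reverseBlock indep B w = some v) :
    (w.map f).prod = (v.map f).prod := by
  obtain ⟨v', hv', rfl⟩ := Option.map_eq_some_iff.1 h
  rw [prod_map_of_extractAll hf hv', List.map_congr_left fun a _ => readFrom_eq w a, List.map_id']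
  simp only [List.map_append, List.prod_append, hB]

theorem prod_map_of_reverseBlocks (hf : ∀ a b, indep a b → Commute (f a) (f b))
    {Bs : List (List α)} (hBs : ∀ B ∈ Bs, (B.map f).prod = (B.reverse.map f).prod) {w v : List α}
    (h : reverseBlocks indep Bs w = some v) : (w.map f).prod = (v.map f).prod := by
  induction Bs generalizing w with
  | nil => cases h; rfl
  | cons B Bs ih =>
    obtain ⟨w', hw', hv⟩ := Option.bind_eq_some_iff.1 h
    rw [prod_map_of_reverseBlock hf (hBs B List.mem_cons_self) hw']
    exact ih (fun B' hB' => hBs B' (List.mem_cons_of_mem B hB')) hv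

end TraceRewriting

section Involutions

variable {M : Type*} [Monoid M]

theorem prod_append_singleton_eq_reverse {x : M} {l : List M} (hx : x * x = 1)
    (h : (x :: l).prod = (x :: l).reverse.prod) :
    (l ++ [x]).prod = (l ++ [x]).reverse.prod := by
  simp only [List.prod_cons, List.reverse_cons, List.prod_append, List.prod_nil, mul_one,
    List.reverse_append, List.reverse_nil, List.nil_append, List.singleton_append] at h ⊢
  calc l.prod * x = x * (x * l.prod) * x := by rw [← mul_assoc x x, hx, one_mul]
    _ = x * (l.reverse.prod * x) * x := by rw [h]
    _ = x * l.reverse.prod := by rw [mul_assoc, mul_assoc, hx, mul_one]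

theorem prod_rotate_eq_reverse {l : List M} (hl : ∀ x ∈ l, x * x = 1)
    (h : l.prod = l.reverse.prod) (k : ℕ) : (l.rotate k).prod = (l.rotate k).reverse.prod := by
  induction k with
  | zero => simpa only [List.rotate_zero] using h
  | succ k ih =>
    rw [← List.rotate_rotate]
    have hrot : ∀ x ∈ l.rotate k, x * x = 1 := fun x hx => hl x (List.mem_rotate.1 hx)
    generalize l.rotate k = l' at ih hrot
    cases l' with
    | nil => rfl
    | cons x l' =>
      rw [List.rotate_cons_succ, List.rotate_zero]
      exact prod_append_singleton_eq_reverse (hrot x List.mem_cons_self) ih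

end Involutions

theorem combR_combR (a b c : ℕ) : combR (combR (a, b, c)) = (a, b, c) := by
  simp only [combR, Prod.mk.injEq]
  omega

-- The four alternatives are the domains of linearity of `combK`.
theorem combK_combK (a b c d : ℕ) : combK (combK (a, b, c, d)) = (a, b, c, d) := by
  obtain h | h | h | h : c + max b d ≤ a + b ∨ (d ≤ b ∧ a ≤ c) ∨
      (b ≤ d ∧ a + b ≤ c + d ∧ 2 * c + d ≤ 2 * a + b) ∨ (b ≤ d ∧ 2 * a + b ≤ 2 * c + d) := by
    omega
  · have hK : combK (a, b, c, d) = (a + b - d, d, c, b) := by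
      simp only [combK, Prod.mk.injEq]; omega
    rw [hK]; simp only [combK, Prod.mk.injEq]; omega
  · have hK : combK (a, b, c, d) = (b + c - d, d, a, b + 2 * c - 2 * a) := by
      simp only [combK, Prod.mk.injEq]; omega
    rw [hK]; simp only [combK, Prod.mk.injEq]; omega
  · have hK : combK (a, b, c, d) =
        (c, 2 * a + 2 * b - (2 * c + d), 2 * c + d - (a + b), b) := by
      simp only [combK, Prod.mk.injEq]; omega
    rw [hK]; simp only [combK, Prod.mk.injEq]; omega
  · have hK : combK (a, b, c, d) = (c, b, a, 2 * c + d - 2 * a) := by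
      simp only [combK, Prod.mk.injEq]; omega
    rw [hK]; simp only [combK, Prod.mk.injEq]; omega

theorem combK_eq_combR_fold (a b c d : ℕ) :
    let r₁ := combR (c, b, a)
    let r₂ := combR (d, c, r₁.2.2)
    let r₃ := combR (r₂.1, r₁.1, a)
    let r₄ := combR (r₂.2.1, r₁.2.1, r₃.2.2)
    combK (a, b, c, d) = (r₂.2.2, r₄.2.1, r₃.2.1, r₃.1) ∧ r₄.2.2 = r₂.2.2 ∧ r₄.1 = r₃.2.1 := by
  simp only [combK, combR, Prod.mk.injEq]
  omega

theorem combR_tetrahedron (a b c d e f : ℕ) :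
    let r₁ := combR (d, e, f)
    let r₂ := combR (b, c, r₁.2.2)
    let r₃ := combR (a, r₂.2.1, r₁.2.1)
    let r₄ := combR (r₃.1, r₂.1, r₁.1)
    let s₁ := combR (a, b, d)
    let s₂ := combR (s₁.1, c, e)
    let s₃ := combR (s₁.2.1, s₂.2.1, f)
    let s₄ := combR (s₁.2.2, s₂.2.2, s₃.2.2)
    (r₄.1, r₄.2.1, r₃.2.1, r₄.2.2, r₃.2.2, r₂.2.2) = (s₂.1, s₃.1, s₃.2.1, s₄) := by
  obtain had | hda := le_total a d <;> obtain hdf | hfd := le_total d f <;>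
    simp only [combR, Prod.mk.injEq, min_eq_left, min_eq_right, Nat.sub_eq_zero_of_le, add_zero,
      true_and, *] <;>
    omega

/-- An operator on `ℕ^N`: the map `combR` or `combK` together with the positions it acts on. -/
inductive RKOp (N : ℕ)
  | R (i j k : Fin N)
  | K (i j k l : Fin N)
  deriving DecidableEq

namespace RKOp

variable {M N : ℕ}

/-- The positions an operator reads and writes. -/
def positions : RKOp N → List (Fin N)
  | R i j k => [i, j, k]
  | K i j k l => [i, j, k, l]

/-- The operator at the positions relabelled by `e`. -/
def map (e : Fin M → Fin N) : RKOp M → RKOp N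
  | R i j k => R (e i) (e j) (e k)
  | K i j k l => K (e i) (e j) (e k) (e l)

/-- The representative of an operator with increasing index triple, if the triple of an `R` is
decreasing; this uses the symmetry of `combR` in its outer arguments. -/
def orient : RKOp N → RKOp N
  | R i j k => if k < j ∧ j < i then R k j i else R i j k
  | K i j k l => K i j k l

/-- The map on `ℕ^N` denoted by an operator. -/
def act : RKOp N → Function.End (Fin N → ℕ)
  | R i j k => app3 combR i j k
  | K i j k l => app4 combK i j k l

/-- Operators on disjoint sets of positions. -/
def Indep (o q : RKOp N) : Prop :=
  ∀ i ∈ o.positions, i ∉ q.positions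

instance : DecidableRel (Indep (N := N)) := fun o q =>
  inferInstanceAs (Decidable (∀ i ∈ o.positions, i ∉ q.positions))

theorem act_apply_of_notMem {o : RKOp N} {m : Fin N} (hm : m ∉ o.positions) (v : Fin N → ℕ) :
    o.act v m = v m := by
  cases o <;> simp only [positions, List.mem_cons, List.not_mem_nil, or_false, not_or] at hm <;>
    simp only [act, app3, app4, hm, if_false]

theorem act_apply_congr {o : RKOp N} {v v' : Fin N → ℕ} (h : ∀ i ∈ o.positions, v i = v' i)
    {m : Fin N} (hm : m ∈ o.positions) : o.act v m = o.act v' m := by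
  have hvm := h m hm
  cases o <;> simp only [positions, List.forall_mem_cons] at h <;>
    simp only [act, app3, app4, h, hvm]

theorem commute_act {o q : RKOp N} (h : Indep o q) : Commute o.act q.act := by
  funext v m
  change o.act (q.act v) m = q.act (o.act v) m
  by_cases hmo : m ∈ o.positions
  · rw [act_apply_of_notMem (h m hmo)]
    exact act_apply_congr (fun i hi => act_apply_of_notMem (h i hi) v) hmo
  · rw [act_apply_of_notMem hmo]
    by_cases hmq : m ∈ q.positions
    · exact (act_apply_congr (fun i hi => act_apply_of_notMem (fun hio => h i hio hi) v) hmq).symm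
    · rw [act_apply_of_notMem hmq, act_apply_of_notMem hmq, act_apply_of_notMem hmo]

theorem semiconj_act_map {e : Fin M → Fin N} (he : e.Injective) (o : RKOp M) :
    Function.Semiconj (· ∘ e) (o.map e).act o.act := by
  intro v
  funext m
  cases o <;> simp only [map, act, app3, app4, Function.comp_apply, he.eq_iff]

theorem act_mul_self {o : RKOp N} (ho : o.positions.Nodup) : o.act * o.act = 1 := by
  funext v m
  change o.act (o.act v) m = v m
  cases o with
  | R i j k =>
    simp only [positions, List.nodup_cons, List.mem_cons, List.not_mem_nil, or_false, not_or] at ho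
    have hRR := combR_combR (v i) (v j) (v k)
    simp only [act, app3]
    grind
  | K i j k l =>
    simp only [positions, List.nodup_cons, List.mem_cons, List.not_mem_nil, or_false, not_or] at ho
    have hKK := combK_combK (v i) (v j) (v k) (v l)
    simp only [act, app4]
    grind

theorem act_R_reverse {i j k : Fin N} (hij : i ≠ j) (hjk : j ≠ k) :
    (R k j i).act = (R i j k).act := by
  funext v m
  simp only [act, app3, combR]
  grind

theorem act_orient (o : RKOp N) : o.orient.act = o.act := by
  cases o with
  | R i j k =>
    rw [orient]
    split_ifs with h
    · exact act_R_reverse h.2.ne' h.1.ne'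
    · rfl
  | K i j k l => rfl

end RKOp

open RKOp

section Words

variable {n M N : ℕ}

/-- The composite map denoted by a word of operators, the rightmost one acting first. -/
def eval (w : List (RKOp N)) : Function.End (Fin N → ℕ) :=
  (w.map act).prod

/-- The operators of the word may be composed in the opposite order: the common shape of the
tetrahedron equation and its `B₃`, `C₃` and `F₄` analogues. -/
def IsReversible (w : List (RKOp N)) : Prop :=
  eval w = eval w.reverse

theorem eval_cons (o : RKOp N) (w : List (RKOp N)) : eval (o :: w) = o.act * eval w :=
  List.prod_cons

theorem eval_cons_eq_comp (o : RKOp N) (w : List (RKOp N)) :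
    eval (o :: w) = o.act ∘ eval w :=
  rfl

theorem eval_append (w w' : List (RKOp N)) : eval (w ++ w') = eval w * eval w' := by
  rw [eval, List.map_append, List.prod_append, eval, eval]

theorem eval_map_orient (w : List (RKOp N)) : eval (w.map orient) = eval w := by
  rw [eval, List.map_map, eval]
  exact congrArg List.prod (List.map_congr_left fun o _ => act_orient o)

theorem eval_apply_of_notMem {w : List (RKOp N)} {m : Fin N} (hm : ∀ o ∈ w, m ∉ o.positions)
    (v : Fin N → ℕ) : eval w v m = v m := by
  induction w with
  | nil => rfl
  | cons o w ih =>
    rw [List.forall_mem_cons] at hm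
    rw [eval_cons]
    exact (act_apply_of_notMem hm.1 _).trans (ih hm.2)

theorem semiconj_eval_map {e : Fin M → Fin N} (he : e.Injective) (w : List (RKOp M)) :
    Function.Semiconj (· ∘ e) (eval (w.map (RKOp.map e))) (eval w) := by
  induction w with
  | nil => exact .id_right
  | cons o w ih =>
    rw [List.map_cons, eval_cons, eval_cons]
    exact (semiconj_act_map he o).comp_right ih

theorem eval_map_apply_of_notMem_range {e : Fin M → Fin N} {m : Fin N} (hm : m ∉ Set.range e)
    (w : List (RKOp M)) (v : Fin N → ℕ) : eval (w.map (RKOp.map e)) v m = v m := by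
  refine eval_apply_of_notMem (fun o ho => ?_) v
  obtain ⟨q, -, rfl⟩ := List.mem_map.1 ho
  have hme : ∀ i, m ≠ e i := fun i h => hm ⟨i, h.symm⟩
  cases q <;> simp only [RKOp.map, positions, List.mem_cons, hme, List.not_mem_nil, or_self,
    not_false_eq_true]

theorem IsReversible.reverse {w : List (RKOp N)} (h : IsReversible w) :
    IsReversible w.reverse := by
  rw [IsReversible, List.reverse_reverse]
  exact Eq.symm h

theorem IsReversible.map {w : List (RKOp M)} (h : IsReversible w) {e : Fin M → Fin N}
    (he : e.Injective) : IsReversible (w.map (RKOp.map e)) := by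
  rw [IsReversible, ← List.map_reverse]
  funext v m
  by_cases hm : m ∈ Set.range e
  · obtain ⟨i, rfl⟩ := hm
    have hv := ((semiconj_eval_map he w) v).trans <|
      (congrFun h _).trans ((semiconj_eval_map he w.reverse) v).symm
    exact congrFun hv i
  · rw [eval_map_apply_of_notMem_range hm, eval_map_apply_of_notMem_range hm]

theorem IsReversible.rotate {w : List (RKOp N)} (h : IsReversible w)
    (hw : ∀ o ∈ w, o.positions.Nodup) (k : ℕ) : IsReversible (w.rotate k) := by
  rw [IsReversible, eval, eval, List.map_reverse, List.map_rotate]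
  refine prod_rotate_eq_reverse (fun x hx => ?_) ?_ k
  · obtain ⟨o, ho, rfl⟩ := List.mem_map.1 hx
    exact act_mul_self (hw o ho)
  · rwa [← List.map_reverse]

theorem IsReversible.map_orient {w : List (RKOp N)} (h : IsReversible w) :
    IsReversible (w.map orient) := by
  rw [IsReversible, ← List.map_reverse, eval_map_orient, eval_map_orient]
  exact h

/-- An occurrence of a rank-three equation: the word `rule`, started cyclically at its letter
number `offset` and written at the given positions. -/
structure Move (n N : ℕ) where
  rule : List (RKOp n)
  offset : ℕ
  position : Fin n → Fin N

/-- The word that a move reverses. -/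
def Move.block (m : Move n N) : List (RKOp N) :=
  ((m.rule.rotate m.offset).map (RKOp.map m.position)).map orient

theorem Move.isReversible_block {m : Move n N} (hrule : IsReversible m.rule)
    (hnodup : ∀ o ∈ m.rule, o.positions.Nodup) (hpos : m.position.Injective) :
    IsReversible m.block :=
  ((hrule.rotate hnodup m.offset).map hpos).map_orient

theorem eval_eq_of_moves {moves : List (Move n N)} {w w' : List (RKOp N)}
    (hrule : ∀ m ∈ moves, IsReversible m.rule)
    (hvalid : ∀ m ∈ moves, (∀ o ∈ m.rule, o.positions.Nodup) ∧ m.position.Injective)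
    (h : (reverseBlocks Indep (moves.map Move.block) w).bind (extractAll Indep w') = some []) :
    eval w = eval w' := by
  have hcomm : ∀ o q : RKOp N, Indep o q → Commute o.act q.act := fun _ _ => commute_act
  have hblock : ∀ B ∈ moves.map Move.block, IsReversible B := by
    rintro B hB
    obtain ⟨m, hm, rfl⟩ := List.mem_map.1 hB
    exact m.isReversible_block (hrule m hm) (hvalid m hm).1 (hvalid m hm).2
  obtain ⟨u, hwu, huw'⟩ := Option.bind_eq_some_iff.1 h
  calc eval w = eval u := prod_map_of_reverseBlocks hcomm hblock hwu
    _ = eval w' * 1 := prod_map_of_extractAll hcomm huw'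
    _ = eval w' := mul_one _

end Words

section Folding

variable {M N : ℕ} {p : Fin M → Fin N}

/-- The word `W` on `ℕ^M` restricts to the operator `o` on the vectors that are constant on the
fibres of the folding map `p`. -/
def IsUnfolding (p : Fin M → Fin N) (o : RKOp N) (W : List (RKOp M)) : Prop :=
  Function.Semiconj (· ∘ p) o.act (eval W)

theorem semiconj_eval_flatten {w : List (RKOp N)} {Ws : List (List (RKOp M))}
    (h : List.Forall₂ (IsUnfolding p) w Ws) :
    Function.Semiconj (· ∘ p) (eval w) (eval Ws.flatten) := by
  induction h with
  | nil => exact .id_right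
  | cons ho _ ih =>
    rw [eval_cons, List.flatten_cons, eval_append]
    exact Function.Semiconj.comp_right ho ih

theorem IsReversible.of_isUnfolding (hp : p.Surjective) {w : List (RKOp N)}
    {Ws : List (List (RKOp M))} (h : List.Forall₂ (IsUnfolding p) w Ws)
    (hWs : eval Ws.flatten = eval Ws.reverse.flatten) : IsReversible w := by
  funext v
  refine hp.injective_comp_right ?_
  calc eval w v ∘ p = eval Ws.flatten (v ∘ p) := semiconj_eval_flatten h v
    _ = eval Ws.reverse.flatten (v ∘ p) := by rw [hWs]
    _ = eval w.reverse v ∘ p := (semiconj_eval_flatten (List.forall₂_reverse_iff.2 h) v).symm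

theorem isUnfolding_R {i j k : Fin N} {x y z : Fin M}
    (hp : ∀ m, (p m = i ↔ m = x) ∧ (p m = j ↔ m = y) ∧ (p m = k ↔ m = z)) :
    IsUnfolding p (R i j k) [R x y z] := by
  have hx : p x = i := (hp x).1.2 rfl
  have hy : p y = j := (hp y).2.1.2 rfl
  have hz : p z = k := (hp z).2.2.2 rfl
  intro v
  funext m
  change app3 combR i j k v (p m) = app3 combR x y z (v ∘ p) m
  simp only [app3, hp m, Function.comp_apply, hx, hy, hz]

theorem isUnfolding_R_pair {i j k : Fin N} {x x' y y' z z' : Fin M}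
    (hnodup : [x, x', y, y', z, z'].Nodup)
    (hp : ∀ m, (p m = i ↔ m = x ∨ m = x') ∧ (p m = j ↔ m = y ∨ m = y') ∧
      (p m = k ↔ m = z ∨ m = z')) :
    IsUnfolding p (R i j k) [R x y z, R x' y' z'] := by
  have hx := hp x
  have hx' := hp x'
  have hy := hp y
  have hy' := hp y'
  have hz := hp z
  have hz' := hp z'
  intro v
  funext m
  change app3 combR i j k v (p m) =
    app3 combR x y z (app3 combR x' y' z' (v ∘ p)) m
  have hm := hp m
  simp only [List.nodup_cons, List.mem_cons, List.not_mem_nil, or_false, not_or] at hnodup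
  simp only [app3, Function.comp_apply]
  grind

theorem isUnfolding_K {i j k l : Fin N} {a a' b c c' d : Fin M}
    (hnodup : [a, a', b, c, c', d].Nodup)
    (hp : ∀ m, (p m = i ↔ m = a ∨ m = a') ∧ (p m = j ↔ m = b) ∧
      (p m = k ↔ m = c ∨ m = c') ∧ (p m = l ↔ m = d)) :
    IsUnfolding p (K i j k l) [R c' b a, R d c a, R d c' a', R c b a'] := by
  have ha := hp a
  have ha' := hp a'
  have hb := hp b
  have hc := hp c
  have hc' := hp c'
  have hd := hp d
  intro v
  funext m
  change app4 combK i j k l v (p m) =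
    app3 combR c' b a (app3 combR d c a (app3 combR d c' a' (app3 combR c b a' (v ∘ p)))) m
  have hm := hp m
  have hfold := combK_eq_combR_fold (v i) (v j) (v k) (v l)
  simp only [List.nodup_cons, List.mem_cons, List.not_mem_nil, or_false, not_or] at hnodup
  simp only [app3, app4, Function.comp_apply]
  grind

end Folding

/-- The word of the tetrahedron equation. -/
def tetrahedron : List (RKOp 6) :=
  [R 0 1 3, R 0 2 4, R 1 2 5, R 3 4 5]

/-- The word of the three-dimensional reflection equation of type `B₃`, with positions numbered
along a reduced expression of the longest element. -/
def b3 : List (RKOp 9) :=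
  [R 3 4 5, R 0 1 5, K 6 4 2 0, R 0 3 7, R 1 4 7, K 8 3 2 1, K 8 7 6 5]

/-- The word of the three-dimensional reflection equation of type `C₃`, with positions numbered
along a reduced expression of the longest element. -/
def c3 : List (RKOp 9) :=
  [R 3 4 6, K 6 2 1 0, K 7 5 3 0, R 1 4 7, R 1 3 8, K 8 5 4 2, R 6 7 8]

/-- The word of the `F₄` equation, with positions numbered from `0`. -/
def f4 : List (RKOp 24) :=
  [R 13 14 15, R 8 10 15, K 6 7 9 15, K 16 14 12 8, R 3 4 15, R 6 11 16, R 0 1 15, R 5 9 16,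
   R 8 13 17, K 16 4 2 0, R 10 14 17, K 5 7 11 17, R 0 3 17, R 0 7 14, R 6 12 18, K 18 10 5 0,
   K 18 14 11 3, R 2 9 18, R 3 7 10, K 19 13 6 0, R 1 4 17, R 5 12 19, R 2 11 19, R 0 8 20,
   K 19 14 9 1, R 3 13 20, K 2 7 12 20, R 1 10 20, R 1 7 13, R 5 6 21, K 21 3 2 1, R 4 14 20,
   K 21 13 12 10, R 9 11 21, K 22 8 5 1, R 2 6 22, R 18 19 21, K 21 17 16 15, R 9 12 22,
   K 22 13 11 4, R 2 5 23, K 22 20 18 15, K 23 8 6 3, R 16 19 22, K 23 10 9 4, R 11 12 23,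
   R 16 18 23, K 23 20 19 17, R 4 7 8, R 21 22 23]

theorem isReversible_tetrahedron : IsReversible tetrahedron := by
  funext v m
  have h := combR_tetrahedron (v 0) (v 1) (v 2) (v 3) (v 4) (v 5)
  simp only [Prod.ext_iff] at h
  obtain ⟨h₀, h₁, h₂, h₃, h₄, h₅⟩ := h
  fin_cases m
  exacts [h₀, h₁, h₂, h₃, h₄, h₅]

/-- The folding of the twelve positive roots of `D₄` onto the nine of `B₃`. -/
def d4Folding : Fin 12 → Fin 9 :=
  ![0, 1, 2, 2, 3, 4, 5, 6, 6, 7, 8, 8]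

/-- The operators of `b3`, each unfolded to `D₄`. -/
def d4Unfolding : List (List (RKOp 12)) :=
  [[R 4 5 6], [R 0 1 6], [R 3 5 7, R 0 2 7, R 0 3 8, R 2 5 8], [R 0 4 9], [R 1 5 9],
   [R 3 4 10, R 1 2 10, R 1 3 11, R 2 4 11], [R 8 9 10, R 6 7 10, R 6 8 11, R 7 9 11]]

/-- Tetrahedron moves from the unfolding of `b3` to that of its reverse. -/
def d4Moves : List (Move 6 12) :=
  [⟨tetrahedron, 1, ![8, 9, 5, 10, 2, 1]⟩, ⟨tetrahedron, 0, ![0, 3, 4, 8, 9, 10]⟩,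
   ⟨tetrahedron, 0, ![0, 1, 2, 6, 7, 10]⟩, ⟨tetrahedron, 1, ![6, 7, 5, 10, 4, 3]⟩,
   ⟨tetrahedron, 2, ![9, 4, 5, 0, 1, 6]⟩, ⟨tetrahedron, 1, ![6, 8, 5, 11, 4, 2]⟩,
   ⟨tetrahedron, 0, ![0, 1, 3, 6, 8, 11]⟩, ⟨tetrahedron, 0, ![0, 2, 4, 7, 9, 11]⟩,
   ⟨tetrahedron, 1, ![7, 9, 5, 11, 3, 1]⟩]

/-- The folding of the fifteen positive roots of `A₅` onto the nine of `C₃`. -/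
def a5Folding : Fin 15 → Fin 9 :=
  ![0, 1, 1, 2, 3, 3, 4, 4, 5, 6, 6, 7, 7, 8, 8]

/-- The operators of `c3`, each unfolded to `A₅`. -/
def a5Unfolding : List (List (RKOp 15)) :=
  [[R 4 6 9, R 5 7 10], [R 2 3 9, R 0 1 9, R 0 2 10, R 1 3 10],
   [R 5 8 11, R 0 4 11, R 0 5 12, R 4 8 12], [R 1 6 11, R 2 7 12], [R 2 4 13, R 1 5 14],
   [R 7 8 13, R 3 6 13, R 3 7 14, R 6 8 14], [R 10 11 13, R 9 12 14]]

/-- Tetrahedron moves from the unfolding of `c3` to that of its reverse. -/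
def a5Moves : List (Move 6 15) :=
  [⟨tetrahedron, 0, ![1, 3, 6, 10, 11, 13]⟩, ⟨tetrahedron, 2, ![13, 4, 8, 2, 7, 12]⟩,
   ⟨tetrahedron, 0, ![0, 2, 4, 10, 11, 13]⟩, ⟨tetrahedron, 2, ![13, 4, 6, 2, 3, 9]⟩,
   ⟨tetrahedron, 2, ![11, 4, 6, 0, 1, 9]⟩, ⟨tetrahedron, 0, ![4, 6, 8, 9, 12, 14]⟩,
   ⟨tetrahedron, 0, ![5, 7, 8, 10, 11, 13]⟩, ⟨tetrahedron, 2, ![12, 5, 7, 0, 2, 10]⟩,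
   ⟨tetrahedron, 2, ![14, 5, 7, 1, 3, 10]⟩, ⟨tetrahedron, 0, ![0, 1, 5, 9, 12, 14]⟩,
   ⟨tetrahedron, 0, ![2, 3, 7, 9, 12, 14]⟩, ⟨tetrahedron, 2, ![14, 5, 8, 1, 6, 11]⟩]

/-- Moves of types `B₃` and `C₃` from `f4` to its reverse. -/
def f4Moves : List (Move 9 24) :=
  [⟨b3.reverse, 3, ![17, 3, 11, 14, 7, 0, 5, 10, 18]⟩,
   ⟨c3, 0, ![15, 16, 17, 18, 19, 20, 21, 22, 23]⟩,
   ⟨c3.reverse, 1, ![4, 9, 10, 11, 12, 13, 23, 22, 21]⟩, ⟨c3, 0, ![1, 2, 3, 5, 6, 8, 21, 22, 23]⟩,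
   ⟨b3, 0, ![1, 4, 9, 10, 14, 17, 19, 20, 23]⟩, ⟨c3, 2, ![17, 19, 20, 11, 12, 7, 23, 5, 2]⟩,
   ⟨b3, 0, ![0, 3, 6, 8, 13, 17, 19, 20, 23]⟩, ⟨c3, 0, ![0, 2, 4, 5, 9, 10, 16, 18, 23]⟩,
   ⟨b3.reverse, 3, ![17, 4, 11, 13, 7, 1, 5, 8, 22]⟩,
   ⟨c3.reverse, 1, ![3, 6, 8, 11, 12, 14, 23, 18, 16]⟩, ⟨b3, 5, ![20, 8, 12, 14, 7, 0, 2, 4, 16]⟩,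
   ⟨b3.reverse, 3, ![15, 4, 9, 10, 7, 3, 6, 8, 23]⟩,
   ⟨c3.reverse, 1, ![1, 5, 8, 9, 12, 14, 22, 19, 16]⟩, ⟨c3, 0, ![0, 2, 4, 6, 11, 13, 16, 19, 22]⟩,
   ⟨b3, 0, ![0, 1, 5, 8, 10, 15, 18, 20, 22]⟩, ⟨c3, 2, ![15, 18, 20, 9, 12, 7, 22, 6, 2]⟩,
   ⟨b3, 0, ![3, 4, 11, 13, 14, 15, 18, 20, 22]⟩, ⟨b3.reverse, 3, ![15, 1, 9, 14, 7, 0, 6, 13, 19]⟩,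
   ⟨b3, 0, ![8, 10, 12, 13, 14, 15, 16, 17, 21]⟩, ⟨c3, 2, ![15, 16, 17, 9, 11, 7, 21, 6, 5]⟩,
   ⟨b3, 0, ![0, 1, 2, 3, 4, 15, 16, 17, 21]⟩, ⟨c3, 0, ![0, 5, 10, 6, 12, 13, 18, 19, 21]⟩,
   ⟨c3.reverse, 1, ![1, 2, 3, 9, 11, 14, 21, 19, 18]⟩,
   ⟨b3.reverse, 2, ![20, 10, 12, 13, 7, 1, 2, 3, 21]⟩]

theorem eval_flatten_d4Unfolding :
    eval d4Unfolding.flatten = eval d4Unfolding.reverse.flatten := by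
  have hrule : ∀ m ∈ d4Moves, m.rule = tetrahedron := by decide +kernel
  exact eval_eq_of_moves (moves := d4Moves)
    (fun m hm => hrule m hm ▸ isReversible_tetrahedron) (by decide +kernel) (by decide +kernel)

theorem eval_flatten_a5Unfolding :
    eval a5Unfolding.flatten = eval a5Unfolding.reverse.flatten := by
  have hrule : ∀ m ∈ a5Moves, m.rule = tetrahedron := by decide +kernel
  exact eval_eq_of_moves (moves := a5Moves)
    (fun m hm => hrule m hm ▸ isReversible_tetrahedron) (by decide +kernel) (by decide +kernel)

theorem forall₂_isUnfolding_b3 : List.Forall₂ (IsUnfolding d4Folding) b3 d4Unfolding :=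
  .cons (isUnfolding_R (by decide)) <|
  .cons (isUnfolding_R (by decide)) <|
  .cons (isUnfolding_K (by decide) (by decide)) <|
  .cons (isUnfolding_R (by decide)) <|
  .cons (isUnfolding_R (by decide)) <|
  .cons (isUnfolding_K (by decide) (by decide)) <|
  .cons (isUnfolding_K (by decide) (by decide)) .nil

theorem forall₂_isUnfolding_c3 : List.Forall₂ (IsUnfolding a5Folding) c3 a5Unfolding :=
  .cons (isUnfolding_R_pair (by decide) (by decide)) <|
  .cons (isUnfolding_K (by decide) (by decide)) <|
  .cons (isUnfolding_K (by decide) (by decide)) <|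
  .cons (isUnfolding_R_pair (by decide) (by decide)) <|
  .cons (isUnfolding_R_pair (by decide) (by decide)) <|
  .cons (isUnfolding_K (by decide) (by decide)) <|
  .cons (isUnfolding_R_pair (by decide) (by decide)) .nil

theorem isReversible_b3 : IsReversible b3 :=
  .of_isUnfolding (by decide) forall₂_isUnfolding_b3 eval_flatten_d4Unfolding

theorem isReversible_c3 : IsReversible c3 :=
  .of_isUnfolding (by decide) forall₂_isUnfolding_c3 eval_flatten_a5Unfolding

theorem isReversible_rule_of_mem_f4Moves : ∀ m ∈ f4Moves, IsReversible m.rule := by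
  have hrule : ∀ m ∈ f4Moves, m.rule ∈ [b3, b3.reverse, c3, c3.reverse] := by decide +kernel
  have hreversible : ∀ w ∈ [b3, b3.reverse, c3, c3.reverse], IsReversible w := by
    simp only [List.forall_mem_cons, isReversible_b3, isReversible_b3.reverse, isReversible_c3,
      isReversible_c3.reverse, true_and, List.not_mem_nil, false_imp_iff, implies_true]
  exact fun m hm => hreversible m.rule (hrule m hm)

theorem isReversible_f4 : IsReversible f4 :=
  eval_eq_of_moves isReversible_rule_of_mem_f4Moves (by decide +kernel) (by decide +kernel)

end F4Tetrahedron

/-- The combinatorial maps solve the `F₄` analogue of the tetrahedron equation on ℕ²⁴: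
with `S = R` the combinatorial R-map and `K` the combinatorial K-map, the 50-factor identity
of maps from ℕ²⁴ to ℕ²⁴ holds (positions written 1-based in the paper, 0-based here);
the right-hand side is the product of the same 50 operators in the reverse order. -/
theorem combRK_F4_tetrahedron :
    (app3 combR 13 14 15 ∘
      app3 combR 8 10 15 ∘
      app4 combK 6 7 9 15 ∘
      app4 combK 16 14 12 8 ∘
      app3 combR 3 4 15 ∘
      app3 combR 6 11 16 ∘
      app3 combR 0 1 15 ∘
      app3 combR 5 9 16 ∘
      app3 combR 8 13 17 ∘
      app4 combK 16 4 2 0 ∘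
      app3 combR 10 14 17 ∘
      app4 combK 5 7 11 17 ∘
      app3 combR 0 3 17 ∘
      app3 combR 0 7 14 ∘
      app3 combR 6 12 18 ∘
      app4 combK 18 10 5 0 ∘
      app4 combK 18 14 11 3 ∘
      app3 combR 2 9 18 ∘
      app3 combR 3 7 10 ∘
      app4 combK 19 13 6 0 ∘
      app3 combR 1 4 17 ∘
      app3 combR 5 12 19 ∘
      app3 combR 2 11 19 ∘
      app3 combR 0 8 20 ∘
      app4 combK 19 14 9 1 ∘
      app3 combR 3 13 20 ∘
      app4 combK 2 7 12 20 ∘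
      app3 combR 1 10 20 ∘
      app3 combR 1 7 13 ∘
      app3 combR 5 6 21 ∘
      app4 combK 21 3 2 1 ∘
      app3 combR 4 14 20 ∘
      app4 combK 21 13 12 10 ∘
      app3 combR 9 11 21 ∘
      app4 combK 22 8 5 1 ∘
      app3 combR 2 6 22 ∘
      app3 combR 18 19 21 ∘
      app4 combK 21 17 16 15 ∘
      app3 combR 9 12 22 ∘
      app4 combK 22 13 11 4 ∘
      app3 combR 2 5 23 ∘
      app4 combK 22 20 18 15 ∘
      app4 combK 23 8 6 3 ∘
      app3 combR 16 19 22 ∘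
      app4 combK 23 10 9 4 ∘
      app3 combR 11 12 23 ∘
      app3 combR 16 18 23 ∘
      app4 combK 23 20 19 17 ∘
      app3 combR 4 7 8 ∘
      app3 combR 21 22 23 :
      (Fin 24 → ℕ) → Fin 24 → ℕ) =
    (app3 combR 21 22 23 ∘
      app3 combR 4 7 8 ∘
      app4 combK 23 20 19 17 ∘
      app3 combR 16 18 23 ∘
      app3 combR 11 12 23 ∘
      app4 combK 23 10 9 4 ∘
      app3 combR 16 19 22 ∘
      app4 combK 23 8 6 3 ∘
      app4 combK 22 20 18 15 ∘
      app3 combR 2 5 23 ∘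
      app4 combK 22 13 11 4 ∘
      app3 combR 9 12 22 ∘
      app4 combK 21 17 16 15 ∘
      app3 combR 18 19 21 ∘
      app3 combR 2 6 22 ∘
      app4 combK 22 8 5 1 ∘
      app3 combR 9 11 21 ∘
      app4 combK 21 13 12 10 ∘
      app3 combR 4 14 20 ∘
      app4 combK 21 3 2 1 ∘
      app3 combR 5 6 21 ∘
      app3 combR 1 7 13 ∘
      app3 combR 1 10 20 ∘
      app4 combK 2 7 12 20 ∘
      app3 combR 3 13 20 ∘
      app4 combK 19 14 9 1 ∘
      app3 combR 0 8 20 ∘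
      app3 combR 2 11 19 ∘
      app3 combR 5 12 19 ∘
      app3 combR 1 4 17 ∘
      app4 combK 19 13 6 0 ∘
      app3 combR 3 7 10 ∘
      app3 combR 2 9 18 ∘
      app4 combK 18 14 11 3 ∘
      app4 combK 18 10 5 0 ∘
      app3 combR 6 12 18 ∘
      app3 combR 0 7 14 ∘
      app3 combR 0 3 17 ∘
      app4 combK 5 7 11 17 ∘
      app3 combR 10 14 17 ∘
      app4 combK 16 4 2 0 ∘
      app3 combR 8 13 17 ∘
      app3 combR 5 9 16 ∘
      app3 combR 0 1 15 ∘
      app3 combR 6 11 16 ∘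
      app3 combR 3 4 15 ∘
      app4 combK 16 14 12 8 ∘
      app4 combK 6 7 9 15 ∘
      app3 combR 8 10 15 ∘
      app3 combR 13 14 15 :
      (Fin 24 → ℕ) → Fin 24 → ℕ) := by
  have h := F4Tetrahedron.isReversible_f4
  simp only [F4Tetrahedron.IsReversible, F4Tetrahedron.f4, List.reverse_cons, List.reverse_nil,
    List.nil_append, List.cons_append, F4Tetrahedron.eval_cons_eq_comp, F4Tetrahedron.RKOp.act] at h
  exact h
end
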